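/- Let φ:[0,1]→ℝ² be absolutely continuous with ∫₀¹ Λ*(φ'(t)) dt < ∞. Then ‖φ'(t)‖ < R for almost every t ∈ [0,1]; consequently ‖φ(s)−φ(t)‖ ≤ R|s−t| for all s,t ∈ [0,1], and L(φ|_{[a,b]}) < R(b−a) for every 0 ≤ a < b ≤ 1. -/

import Mathlib

open MeasureTheory Set Filter Topology
open scoped ENNReal RealInnerProductSpace

noncomputable section

/-- The Euclidean plane. -/
abbrev E2 := EuclideanSpace ℝ (Fin 2)

/-- The uniform probability measure on a set `A` (normalized Lebesgue measure). -/
def uniformOn {α : Type*} [MeasureSpace α] (A : Set α) : Measure α :=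
  (volume A)⁻¹ • volume.restrict A

/-- The logarithmic moment generating function `Λ` of the uniform probability measure on the
open disk of radius `R` centered at the origin. -/
def logMGF (R : ℝ) (η : E2) : ℝ :=
  Real.log (∫ x, Real.exp (⟪x, η⟫) ∂(uniformOn (Metric.ball (0 : E2) R)))

/-- The Fenchel–Legendre transform `Λ*` of `logMGF R`, valued in `[0,∞]`.  Since the supremum
includes `η = 0` (where the value is `0`), truncating negative values does not change it. -/
def lambdaStar (R : ℝ) (y : E2) : ℝ≥0∞ :=
  ⨆ η : E2, ENNReal.ofReal (⟪y, η⟫ - logMGF R η)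

lemma isProbabilityMeasure_uniformOn_ball {R : ℝ} (hR : 0 < R) :
    IsProbabilityMeasure (uniformOn (Metric.ball (0 : E2) R)) :=
  ProbabilityTheory.cond_isProbabilityMeasure_of_finite
    (Metric.measure_ball_pos volume 0 hR).ne' measure_ball_lt_top.ne

lemma ae_uniformOn_ball_norm_lt (R : ℝ) :
    ∀ᵐ x ∂(uniformOn (Metric.ball (0 : E2) R)), ‖x‖ < R := by
  refine Measure.ae_smul_measure ?_ _
  filter_upwards [ae_restrict_mem Metric.isOpen_ball.measurableSet] with x hx
  simpa using hx

/-- Almost every point of the open disk lies strictly inside each supporting half-plane. -/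
lemma ae_uniformOn_ball_inner_lt (R : ℝ) {u : E2} (hu : ‖u‖ = 1) :
    ∀ᵐ x ∂(uniformOn (Metric.ball (0 : E2) R)), ⟪x, u⟫ < R := by
  filter_upwards [ae_uniformOn_ball_norm_lt R] with x hx
  calc ⟪x, u⟫ ≤ ‖x‖ * ‖u‖ := real_inner_le_norm x u
    _ < R := by rwa [hu, mul_one]

/-- In every direction, `s R - Λ(s u)` diverges as `s → ∞`. -/
lemma tendsto_mul_sub_logMGF_atTop {R : ℝ} (hR : 0 < R) {u : E2} (hu : ‖u‖ = 1) :
    Tendsto (fun s : ℝ => s * R - logMGF R (s • u)) atTop atTop := by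
  have := isProbabilityMeasure_uniformOn_ball hR
  set μ := uniformOn (Metric.ball (0 : E2) R) with hμ
  have hmeas (s : ℝ) : AEStronglyMeasurable (fun x : E2 => Real.exp (s * (⟪x, u⟫ - R))) μ :=
    (by fun_prop : Continuous fun x : E2 => Real.exp (s * (⟪x, u⟫ - R))).aestronglyMeasurable
  have hbound (s : ℝ) (hs : 0 ≤ s) : ∀ᵐ x ∂μ, ‖Real.exp (s * (⟪x, u⟫ - R))‖ ≤ 1 := by
    filter_upwards [ae_uniformOn_ball_inner_lt R hu] with x hx
    rw [Real.norm_eq_abs, Real.abs_exp, Real.exp_le_one_iff]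
    exact mul_nonpos_of_nonneg_of_nonpos hs (by linarith)
  have hlim : Tendsto (fun s : ℝ => ∫ x, Real.exp (s * (⟪x, u⟫ - R)) ∂μ) atTop (𝓝 0) := by
    have h := tendsto_integral_filter_of_dominated_convergence (μ := μ) (l := atTop)
      (F := fun (s : ℝ) (x : E2) => Real.exp (s * (⟪x, u⟫ - R))) (f := fun _ => 0)
      (fun _ => 1) (Eventually.of_forall hmeas) ((eventually_ge_atTop 0).mono hbound)
      (integrable_const 1) ?_
    · simpa using h
    · filter_upwards [ae_uniformOn_ball_inner_lt R hu] with x hx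
      exact Real.tendsto_exp_atBot.comp (tendsto_id.atTop_mul_const_of_neg (by linarith))
  have hpos (s : ℝ) (hs : 0 ≤ s) : 0 < ∫ x, Real.exp (s * (⟪x, u⟫ - R)) ∂μ :=
    integral_exp_pos (.of_bound (hmeas s) 1 (hbound s hs))
  have hlog := tendsto_neg_atBot_atTop.comp (Real.tendsto_log_nhdsGT_zero.comp
    (tendsto_nhdsWithin_iff.2 ⟨hlim, (eventually_ge_atTop 0).mono hpos⟩))
  refine hlog.congr' ((eventually_ge_atTop 0).mono fun s hs => ?_)
  have hmul : ∫ x, Real.exp ⟪x, s • u⟫ ∂μ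
      = Real.exp (s * R) * ∫ x, Real.exp (s * (⟪x, u⟫ - R)) ∂μ := by
    rw [← integral_const_mul]
    refine integral_congr_ae (Eventually.of_forall fun x => ?_)
    simp only [← Real.exp_add, real_inner_smul_right]
    congr 1
    ring
  simp only [Function.comp_apply, logMGF, ← hμ]
  rw [hmul, Real.log_mul (Real.exp_ne_zero _) (hpos s hs).ne', Real.log_exp]
  ring

lemma lambdaStar_eq_top {R : ℝ} (hR : 0 < R) {y : E2} (hy : R ≤ ‖y‖) :
    lambdaStar R y = ⊤ := by
  have hy0 : ‖y‖ ≠ 0 := (hR.trans_le hy).ne'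
  have hu : ‖‖y‖⁻¹ • y‖ = 1 := by
    rw [norm_smul, norm_inv, norm_norm, inv_mul_cancel₀ hy0]
  have hlim := ENNReal.tendsto_ofReal_atTop.comp (tendsto_mul_sub_logMGF_atTop hR hu)
  refine top_le_iff.1 (le_of_tendsto hlim ((eventually_ge_atTop 0).mono fun s hs => ?_))
  refine le_trans (ENNReal.ofReal_le_ofReal ?_)
    (le_iSup (fun η : E2 => ENNReal.ofReal (⟪y, η⟫ - logMGF R η)) (s • ‖y‖⁻¹ • y))
  have hinner : ⟪y, s • ‖y‖⁻¹ • y⟫ = s * ‖y‖ := by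
    rw [real_inner_smul_right, real_inner_smul_right, real_inner_self_eq_norm_sq]
    field_simp
  rw [hinner]
  exact sub_le_sub_right (mul_le_mul_of_nonneg_left hy hs) _

lemma measurable_lambdaStar (R : ℝ) : Measurable (lambdaStar R) := by
  refine (lowerSemicontinuous_iSup fun η => Continuous.lowerSemicontinuous ?_).measurable
  exact ENNReal.continuous_ofReal.comp (by fun_prop)

/-- The variation of a primitive is at most the integral of the norm of its derivative. -/
lemma eVariationOn_le_lintegral_enorm {E : Type*} [NormedAddCommGroup E] [NormedSpace ℝ E]
    {f f' : ℝ → E} {a b : ℝ}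
    (h : ∀ s ∈ Icc a b, ∀ t ∈ Icc a b, f t - f s = ∫ r in s..t, f' r) :
    eVariationOn f (Icc a b) ≤ ∫⁻ r in Ioc a b, ‖f' r‖ₑ := by
  refine iSup_le fun ⟨n, u, hu, hmem⟩ => ?_
  calc ∑ i ∈ Finset.range n, edist (f (u (i + 1))) (f (u i))
      ≤ ∑ i ∈ Finset.range n, ∫⁻ r in Ioc (u i) (u (i + 1)), ‖f' r‖ₑ := by
        refine Finset.sum_le_sum fun i _ => ?_
        rw [edist_eq_enorm_sub, h _ (hmem i) _ (hmem (i + 1)),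
          intervalIntegral.integral_of_le (hu i.le_succ)]
        exact enorm_integral_le_lintegral_enorm _
    _ = ∫⁻ r in ⋃ i ∈ Finset.range n, Ioc (u i) (u (i + 1)), ‖f' r‖ₑ :=
        (lintegral_biUnion_finset (hu.pairwise_disjoint_on_Ioc_succ.set_pairwise _)
          (fun _ _ => measurableSet_Ioc) _).symm
    _ ≤ ∫⁻ r in Ioc a b, ‖f' r‖ₑ :=
        lintegral_mono_set (iUnion₂_subset fun i _ => Ioc_subset_Ioc (hmem i).1 (hmem (i + 1)).2)

/-- If `φ` is absolutely continuous with derivative `g` and finite rate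
`∫₀¹ Λ*(g(t)) dt < ∞`, then `‖g(t)‖ < R` a.e. on `[0,1]`; consequently `φ` is `R`-Lipschitz
on `[0,1]` and `L(φ|_{[a,b]}) < R(b−a)` for all `0 ≤ a < b ≤ 1`. -/
theorem statement11 (R : ℝ) (hR : 0 < R) (φ g : ℝ → E2)
    (hint : IntegrableOn g (Set.Icc 0 1) volume)
    (hAC : ∀ t ∈ Set.Icc (0:ℝ) 1, φ t = φ 0 + ∫ s in (0:ℝ)..t, g s)
    (hfin : (∫⁻ t in Set.Icc (0:ℝ) 1, lambdaStar R (g t)) < ⊤) :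
    (∀ᵐ t ∂(volume.restrict (Set.Icc (0:ℝ) 1)), ‖g t‖ < R) ∧
    (∀ s ∈ Set.Icc (0:ℝ) 1, ∀ t ∈ Set.Icc (0:ℝ) 1, ‖φ s - φ t‖ ≤ R * |s - t|) ∧
    (∀ a b : ℝ, 0 ≤ a → a < b → b ≤ 1 →
      eVariationOn φ (Set.Icc a b) < ENNReal.ofReal (R * (b - a))) := by
  have hlt : ∀ᵐ t ∂(volume.restrict (Set.Icc (0:ℝ) 1)), ‖g t‖ < R := by
    filter_upwards [ae_lt_top' ((measurable_lambdaStar R).comp_aemeasurable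
      hint.aestronglyMeasurable.aemeasurable) hfin.ne] with t ht
    exact lt_of_not_ge fun h => ht.ne (lambdaStar_eq_top hR h)
  have hprim : ∀ s ∈ Set.Icc (0:ℝ) 1, ∀ t ∈ Set.Icc (0:ℝ) 1,
      φ t - φ s = ∫ r in s..t, g r := by
    intro s hs t ht
    have hii (x : ℝ) (hx : x ∈ Set.Icc (0:ℝ) 1) : IntervalIntegrable g volume 0 x :=
      (hint.mono_set (by
        rw [uIcc_of_le hx.1]; exact Icc_subset_Icc_right hx.2)).intervalIntegrable
    rw [hAC s hs, hAC t ht, add_sub_add_left_eq_sub,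
      intervalIntegral.integral_interval_sub_left (hii t ht) (hii s hs)]
  refine ⟨hlt, fun s hs t ht => ?_, fun a b ha hab hb => ?_⟩
  · rw [hprim t ht s hs]
    refine intervalIntegral.norm_integral_le_of_norm_le_const_ae ?_
    filter_upwards [(ae_restrict_iff' measurableSet_Icc).1 hlt] with r hr hmem
    exact (hr (uIcc_subset_Icc ht hs (uIoc_subset_uIcc hmem))).le
  · have hsub : Icc a b ⊆ Icc (0:ℝ) 1 := Icc_subset_Icc ha hb
    have hsub' : Ioc a b ⊆ Icc (0:ℝ) 1 := Ioc_subset_Icc_self.trans hsub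
    calc eVariationOn φ (Set.Icc a b) ≤ ∫⁻ r in Ioc a b, ‖g r‖ₑ :=
          eVariationOn_le_lintegral_enorm fun s hs t ht => hprim s (hsub hs) t (hsub ht)
      _ < ∫⁻ _ in Ioc a b, ENNReal.ofReal R := by
          refine lintegral_strict_mono ?_ aemeasurable_const (hint.mono_set hsub').2.ne ?_
          · simp [Measure.restrict_eq_zero, hab]
          · filter_upwards [ae_restrict_of_ae_restrict_of_subset hsub' hlt] with r hr
            rw [← ofReal_norm]
            exact (ENNReal.ofReal_lt_ofReal_iff hR).2 hr
      _ = ENNReal.ofReal (R * (b - a)) := by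
          rw [setLIntegral_const, Real.volume_Ioc, ENNReal.ofReal_mul hR.le]
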